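/- arXiv:math/0305124 — 2 statements merged into one kernel-verified Lean document; each statement's English description precedes it below -/
import Mathlib

section
/- Let β be an alternating 2-form on ℝ⁷ satisfying Σ_{j,k=1}^{7} ε_{ijk} β(e_j,e_k) = 0 for every i ∈ {1,…,7}. Then |β∧β|² = |β|⁴, where |β|² := Σ_{a<b} β(e_a,e_b)² and |β∧β|² := Σ_{a<b<c<d} (β∧β)(e_a,e_b,e_c,e_d)². -/
/-!
Let `A` be the skew-symmetric matrix of `β` and `Lᵤ` the matrix of the cross product with `eᵤ`.
Contracting the Lagrange identity with a matrix `X` such that `⟨X⟩ = 0` gives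
`∑ᵤ Lᵤ X Lᵤ = 2Xᵀ - X - tr(X) 1`. In dimension seven it follows that the traces of the squares of
the skew-symmetric matrices `L_{A eᵤ} - [A, Lᵤ]` add up to zero, so that `A` is a derivation of the
cross product: this is the isomorphism `Λ²₁₄ ≅ 𝔤₂`. Therefore the cross product with `A² eᵤ` is
`[[Lᵤ, A], A]`, and comparing the sums over `u` of the traces of the squares of both sides yields
`4 tr A⁴ = (tr A²)²`. Every 2-form satisfies `tr A² = -2|β|²` and, by expanding the squared
Pfaffians, `|β ∧ β|² = 2|β|⁴ - tr A⁴`; the right-hand side is `|β|⁴` here.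
-/

open scoped BigOperators Matrix

noncomputable section

namespace G2

/-- The standard basis vector `e i` of `ℝ⁷`. -/
def e (i : Fin 7) : Fin 7 → ℝ := fun j => if j = i then 1 else 0

/-- The 3-form `e^a ∧ e^b ∧ e^c` (determinant convention), evaluated on `(x, y, z)`. -/
def w3 (a b c : Fin 7) (x y z : Fin 7 → ℝ) : ℝ :=
  x a * (y b * z c - y c * z b) - x b * (y a * z c - y c * z a)
    + x c * (y a * z b - y b * z a)

/-- The 4-form `e^a ∧ e^b ∧ e^c ∧ e^d`, evaluated on `(x, y, z, w)`. -/
def w4 (a b c d : Fin 7) (x y z w : Fin 7 → ℝ) : ℝ :=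
  Matrix.det !![x a, x b, x c, x d; y a, y b, y c, y d;
                z a, z b, z c, z d; w a, w b, w c, w d]

/-- The fundamental `G₂` 3-form
`φ = e^{123}+e^{145}+e^{167}+e^{246}-e^{257}-e^{347}-e^{356}` (indices shifted to start at 0),
as a trilinear alternating function of three vectors. -/
def phi (x y z : Fin 7 → ℝ) : ℝ :=
  w3 0 1 2 x y z + w3 0 3 4 x y z + w3 0 5 6 x y z + w3 1 3 5 x y z
    - w3 1 4 6 x y z - w3 2 3 6 x y z - w3 2 4 5 x y z

/-- The 4-form `ψ = *φ = e^{4567}+e^{2367}+e^{2345}+e^{1357}-e^{1346}-e^{1256}-e^{1247}`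
(indices shifted to start at 0), as a function of four vectors. -/
def psi (x y z w : Fin 7 → ℝ) : ℝ :=
  w4 3 4 5 6 x y z w + w4 1 2 5 6 x y z w + w4 1 2 3 4 x y z w + w4 0 2 4 6 x y z w
    - w4 0 2 3 5 x y z w - w4 0 1 4 5 x y z w - w4 0 1 3 6 x y z w

/-- `ε_{ijk} = φ(e_i, e_j, e_k)`. -/
def eps (i j k : Fin 7) : ℝ := phi (e i) (e j) (e k)

/-- `ε_{ijkl} = ψ(e_i, e_j, e_k, e_l)`. -/
def eps4 (i j k l : Fin 7) : ℝ := psi (e i) (e j) (e k) (e l)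

/-- The volume form `e^1 ∧ ⋯ ∧ e^7`, evaluated on a 7-tuple of vectors. -/
def vol (v : Fin 7 → (Fin 7 → ℝ)) : ℝ := Matrix.det (Matrix.of fun i j => v i j)

/-- The matrix `[v]` with `[v]_{ij} = Σ_k ε_{ijk} v_k`. -/
def bracket (v : Fin 7 → ℝ) : Matrix (Fin 7) (Fin 7) ℝ :=
  Matrix.of fun i j => ∑ k : Fin 7, eps i j k * v k

/-- The vector `⟨A⟩` with `⟨A⟩_i = Σ_{j,k} ε_{ijk} A_{jk}`. -/
def angle (A : Matrix (Fin 7) (Fin 7) ℝ) : Fin 7 → ℝ :=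
  fun i => ∑ j : Fin 7, ∑ k : Fin 7, eps i j k * A j k

/-- Wedge product of two 2-forms (determinant convention), evaluated on four vectors. -/
def wedge22 (A B : (Fin 7 → ℝ) → (Fin 7 → ℝ) → ℝ) (v : Fin 4 → (Fin 7 → ℝ)) : ℝ :=
  (1 / 4 : ℝ) * ∑ σ : Equiv.Perm (Fin 4),
    ((Equiv.Perm.sign σ : ℤ) : ℝ) * (A (v (σ 0)) (v (σ 1)) * B (v (σ 2)) (v (σ 3)))

/-- Wedge product of three 2-forms (determinant convention), evaluated on six vectors. -/
def wedge222 (A B C : (Fin 7 → ℝ) → (Fin 7 → ℝ) → ℝ) (v : Fin 6 → (Fin 7 → ℝ)) : ℝ :=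
  (1 / 8 : ℝ) * ∑ σ : Equiv.Perm (Fin 6),
    ((Equiv.Perm.sign σ : ℤ) : ℝ) *
      (A (v (σ 0)) (v (σ 1)) * B (v (σ 2)) (v (σ 3)) * C (v (σ 4)) (v (σ 5)))

/-- Wedge product of two 2-forms and a 3-form (determinant convention),
evaluated on seven vectors. -/
def wedge223 (A B : (Fin 7 → ℝ) → (Fin 7 → ℝ) → ℝ)
    (C : (Fin 7 → ℝ) → (Fin 7 → ℝ) → (Fin 7 → ℝ) → ℝ)
    (v : Fin 7 → (Fin 7 → ℝ)) : ℝ :=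
  (1 / 24 : ℝ) * ∑ σ : Equiv.Perm (Fin 7),
    ((Equiv.Perm.sign σ : ℤ) : ℝ) *
      (A (v (σ 0)) (v (σ 1)) * B (v (σ 2)) (v (σ 3)) * C (v (σ 4)) (v (σ 5)) (v (σ 6)))

/-- The map `i_φ : S²(ℝ⁷)* → Λ³(ℝ⁷)*`,
`i_φ(h) = Σ_{i,j,k,l} ε_{ikl} h_{ij} e^j ∧ e^k ∧ e^l`, evaluated on `(x, y, z)`. -/
def iphi (h : Fin 7 → Fin 7 → ℝ) (x y z : Fin 7 → ℝ) : ℝ :=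
  ∑ i : Fin 7, ∑ j : Fin 7, ∑ k : Fin 7, ∑ l : Fin 7, eps i k l * h i j * w3 j k l x y z

open Finset Function

section CrossProduct

variable {ι R : Type*} [Fintype ι] [CommRing R]

theorem trace_lie_mul (X Y Z : Matrix ι ι R) : (⁅X, Y⁆ * Z).trace = (X * ⁅Y, Z⁆).trace := by
  simp only [Ring.lie_def, sub_mul, mul_sub, Matrix.trace_sub, Matrix.mul_assoc]
  rw [Matrix.trace_mul_comm Y, Matrix.mul_assoc]

theorem trace_lie_mul_lie (L A : Matrix ι ι R) :
    (⁅L, A⁆ * ⁅L, A⁆).trace = 2 * (L * A * L * A).trace - 2 * (L * (A * A) * L).trace := by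
  have hcycle : (L * (L * (A * A))).trace = (L * (A * A) * L).trace :=
    Matrix.trace_mul_comm L (L * (A * A))
  rw [trace_lie_mul]
  simp only [Ring.lie_def, sub_mul, mul_sub, Matrix.trace_sub, Matrix.mul_assoc] at hcycle ⊢
  linear_combination -hcycle

theorem trace_lie_lie_mul_lie_lie (L A : Matrix ι ι R) :
    (⁅⁅L, A⁆, A⁆ * ⁅⁅L, A⁆, A⁆).trace = 6 * (L * (A * A) * L * (A * A)).trace
      - 8 * (L * A * L * (A * A * A)).trace + 2 * (L * (A * A * (A * A)) * L).trace := by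
  have hcycle₁ : (L * (A * A * A) * (L * A)).trace = (L * A * (L * (A * A * A))).trace :=
    Matrix.trace_mul_comm _ _
  have hcycle₂ : (L * (L * (A * A * (A * A)))).trace = (L * (A * A * (A * A)) * L).trace :=
    Matrix.trace_mul_comm _ _
  rw [trace_lie_mul, trace_lie_mul]
  simp only [Ring.lie_def, sub_mul, mul_sub, Matrix.trace_sub, Matrix.mul_assoc]
    at hcycle₁ hcycle₂ ⊢
  linear_combination hcycle₂ - 4 * hcycle₁

theorem trace_eq_zero_of_transpose_eq_neg [IsAddTorsionFree R]
    {A : Matrix ι ι R} (hA : Aᵀ = -A) : A.trace = 0 := by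
  have h := A.trace_transpose
  rw [hA, Matrix.trace_neg] at h
  exact self_eq_neg.mp h.symm

theorem trace_mul_self_of_transpose_eq_neg {A : Matrix ι ι R} (hA : Aᵀ = -A) :
    (A * A).trace = -∑ a, ∑ b, A a b ^ 2 := by
  have hskew (a b : ι) : A b a = -A a b := congrFun₂ hA a b
  simp only [Matrix.trace, Matrix.diag, Matrix.mul_apply, ← sum_neg_distrib]
  exact sum_congr rfl fun a _ => sum_congr rfl fun b _ => by rw [hskew a b]; ring

theorem eq_zero_of_sum_trace_mul_self_eq_zero [LinearOrder R] [IsStrictOrderedRing R]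
    {κ : Type*} [Fintype κ] {D : κ → Matrix ι ι R} (hD : ∀ u, (D u)ᵀ = -D u)
    (htrace : ∑ u, (D u * D u).trace = 0) (u : κ) : D u = 0 := by
  have hsq : ∑ u, ∑ i, ∑ j, D u i j ^ 2 = 0 := by
    rw [← neg_eq_zero, ← sum_neg_distrib, ← htrace]
    exact sum_congr rfl fun v _ => (trace_mul_self_of_transpose_eq_neg (hD v)).symm
  ext i j
  rw [sum_eq_zero_iff_of_nonneg fun v _ => by positivity] at hsq
  have hu := hsq u (mem_univ u)
  rw [sum_eq_zero_iff_of_nonneg fun i _ => by positivity] at hu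
  have hi := hu i (mem_univ i)
  rw [sum_eq_zero_iff_of_nonneg fun j _ => by positivity] at hi
  exact pow_eq_zero_iff two_ne_zero |>.mp (hi j (mem_univ j))

/-- The contraction `⟨X⟩` of a matrix with structure constants `ε`, extending `angle` to arbitrary
`ε`; the skew-symmetric matrices it annihilates are the analogue of `Λ²₁₄`. -/
def axialVector (ε : ι → ι → ι → R) (X : Matrix ι ι R) (i : ι) : R :=
  ∑ j, ∑ k, ε i j k * X j k

/-- The matrix of the cross product with the basis vector `eᵤ`, up to sign. -/
def crossMatrix (ε : ι → ι → ι → R) (u : ι) : Matrix ι ι R := Matrix.of (ε u)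

/-- The matrix, up to sign, of the cross product with the `u`-th row of `X`. -/
def crossMatrixRow (ε : ι → ι → ι → R) (X : Matrix ι ι R) (u : ι) : Matrix ι ι R :=
  ∑ a, X u a • crossMatrix ε a

/-- The linear operator `X ↦ ∑ᵤ Lᵤ X Lᵤ` on matrices, where `Lᵤ` is the cross product with `eᵤ`. -/
def crossSandwich (ε : ι → ι → ι → R) (X : Matrix ι ι R) : Matrix ι ι R :=
  ∑ u, crossMatrix ε u * X * crossMatrix ε u

theorem crossMatrixRow_mul (ε : ι → ι → ι → R) (X Y : Matrix ι ι R) (u : ι) :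
    crossMatrixRow ε (X * Y) u = ∑ a, X u a • crossMatrixRow ε Y a := by
  simp only [crossMatrixRow, Matrix.mul_apply, sum_smul, smul_sum, smul_smul]
  exact sum_comm

theorem sum_trace_crossMatrix_mul (ε : ι → ι → ι → R) (X Y : Matrix ι ι R) :
    ∑ u, (crossMatrix ε u * X * crossMatrix ε u * Y).trace = (crossSandwich ε X * Y).trace := by
  rw [crossSandwich, sum_mul, Matrix.trace_sum]

theorem sum_trace_crossMatrix_mul_mul (ε : ι → ι → ι → R) (X : Matrix ι ι R) :
    ∑ u, (crossMatrix ε u * X * crossMatrix ε u).trace = (crossSandwich ε X).trace := by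
  rw [crossSandwich, Matrix.trace_sum]

theorem crossSandwich_neg (ε : ι → ι → ι → R) (X : Matrix ι ι R) :
    crossSandwich ε (-X) = -crossSandwich ε X := by
  simp [crossSandwich]

variable [DecidableEq ι]

/-- `ε` is the family of structure constants `ε i j k = ⟨eᵢ × eⱼ, eₖ⟩` of a vector cross product in
an orthonormal basis. The field `lagrange` is the full polarization of
`|x × y|² = |x|²|y|² - ⟨x, y⟩²`, with the identity matrix as Kronecker delta. -/
structure IsCrossProduct (ε : ι → ι → ι → R) : Prop where
  swap : ∀ i j k, ε j i k = -ε i j k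
  rotate : ∀ i j k, ε j k i = ε i j k
  lagrange : ∀ i j k l, ∑ u, ε i j u * ε k l u + ∑ u, ε k j u * ε i l u =
    2 * (1 : Matrix ι ι R) i k * (1 : Matrix ι ι R) j l
      - (1 : Matrix ι ι R) i j * (1 : Matrix ι ι R) k l
      - (1 : Matrix ι ι R) k j * (1 : Matrix ι ι R) i l

theorem crossMatrixRow_one (ε : ι → ι → ι → R) (u : ι) :
    crossMatrixRow ε 1 u = crossMatrix ε u := by
  simp [crossMatrixRow, Matrix.one_apply]

namespace IsCrossProduct

variable {ε : ι → ι → ι → R}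

theorem swap_right (hε : IsCrossProduct ε) (i j k : ι) : ε i k j = -ε i j k := by
  rw [← hε.rotate, hε.swap, hε.rotate]

theorem transpose_crossMatrix (hε : IsCrossProduct ε) (u : ι) :
    (crossMatrix ε u)ᵀ = -crossMatrix ε u := by
  ext i j
  simp [crossMatrix, hε.swap_right u i j]

theorem sum_mul_rotate (hε : IsCrossProduct ε) (i a b j : ι) :
    ∑ u, ε i a u * ε b j u = ∑ u, ε i j u * ε a b u
      + 2 * (1 : Matrix ι ι R) i b * (1 : Matrix ι ι R) a j
      - (1 : Matrix ι ι R) i a * (1 : Matrix ι ι R) b j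
      - (1 : Matrix ι ι R) b a * (1 : Matrix ι ι R) i j := by
  have hswap : ∑ u, ε b a u * ε i j u = -∑ u, ε i j u * ε a b u := by
    rw [← sum_neg_distrib]
    exact sum_congr rfl fun u _ => by rw [hε.swap a b]; ring
  linear_combination hε.lagrange i a b j - hswap

theorem crossSandwich_apply (hε : IsCrossProduct ε) (X : Matrix ι ι R) (i j : ι) :
    crossSandwich ε X i j = ∑ a, ∑ b, (∑ u, ε i a u * ε b j u) * X a b := by
  simp only [crossSandwich, crossMatrix, Matrix.sum_apply, Matrix.mul_apply, Matrix.of_apply,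
    sum_mul]
  rw [sum_comm, sum_comm_cycle]
  refine sum_congr rfl fun a _ => sum_congr rfl fun b _ => sum_congr rfl fun u _ => ?_
  rw [← hε.rotate u i a, hε.rotate u b j]
  ring

theorem sum_smul_crossMatrix_mul (hε : IsCrossProduct ε) (X : Matrix ι ι R) :
    ∑ a, ∑ b, X a b • (crossMatrix ε a * crossMatrix ε b) = crossSandwich ε X := by
  ext i j
  simp only [hε.crossSandwich_apply, Matrix.sum_apply, Matrix.smul_apply, Matrix.mul_apply,
    crossMatrix, Matrix.of_apply, smul_eq_mul, mul_sum, sum_mul]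
  refine sum_congr rfl fun a _ => sum_congr rfl fun b _ => sum_congr rfl fun u _ => ?_
  rw [hε.swap i a, hε.swap_right b j]
  ring

theorem sum_crossMatrixRow_mul (hε : IsCrossProduct ε) (X Y : Matrix ι ι R) :
    ∑ u, crossMatrixRow ε X u * crossMatrixRow ε Y u = crossSandwich ε (Xᵀ * Y) := by
  simp only [← hε.sum_smul_crossMatrix_mul, crossMatrixRow, sum_mul_sum, smul_mul_smul_comm,
    Matrix.mul_apply, Matrix.transpose_apply, sum_smul]
  rw [sum_comm]
  exact sum_congr rfl fun a _ => sum_comm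

theorem sum_crossMatrixRow_mul_crossMatrix (hε : IsCrossProduct ε) (X : Matrix ι ι R) :
    ∑ u, crossMatrixRow ε X u * crossMatrix ε u = crossSandwich ε Xᵀ := by
  simpa [crossMatrixRow_one] using hε.sum_crossMatrixRow_mul X 1

theorem sum_crossMatrix_mul_crossMatrixRow (hε : IsCrossProduct ε) (X : Matrix ι ι R) :
    ∑ u, crossMatrix ε u * crossMatrixRow ε X u = crossSandwich ε X := by
  simpa [crossMatrixRow_one] using hε.sum_crossMatrixRow_mul 1 X

theorem transpose_crossMatrixRow (hε : IsCrossProduct ε) (X : Matrix ι ι R) (u : ι) :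
    (crossMatrixRow ε X u)ᵀ = -crossMatrixRow ε X u := by
  simp [crossMatrixRow, Matrix.transpose_sum, hε.transpose_crossMatrix]

theorem crossSandwich_of_axialVector_eq_zero (hε : IsCrossProduct ε) {X : Matrix ι ι R}
    (hX : axialVector ε X = 0) :
    crossSandwich ε X = (2 : R) • Xᵀ - X - X.trace • 1 := by
  have hcontract (i j : ι) : ∑ a, ∑ b, (∑ u, ε i j u * ε a b u) * X a b = 0 := calc
    _ = ∑ u, ε i j u * axialVector ε X u := by
      simp only [axialVector, sum_mul, mul_sum]
      rw [sum_comm_cycle]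
      simp only [hε.rotate, mul_assoc]
    _ = 0 := by simp [hX]
  ext i j
  simp only [hε.crossSandwich_apply, hε.sum_mul_rotate i _ _ j, add_mul, sub_mul,
    sum_add_distrib, sum_sub_distrib, hcontract]
  simp [Matrix.one_apply, Matrix.trace]

section IsAddTorsionFree

variable [IsAddTorsionFree R]

theorem axialVector_of_isSymm (hε : IsCrossProduct ε) {S : Matrix ι ι R} (hS : S.IsSymm) :
    axialVector ε S = 0 := by
  ext i
  refine self_eq_neg.mp ?_
  calc axialVector ε S i = ∑ k, ∑ j, ε i j k * S j k := sum_comm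
    _ = -axialVector ε S i := by
      simp only [axialVector, ← sum_neg_distrib]
      refine sum_congr rfl fun j _ => sum_congr rfl fun k _ => ?_
      rw [hε.swap_right, hS.apply]
      ring

theorem crossSandwich_of_isSymm (hε : IsCrossProduct ε) {S : Matrix ι ι R} (hS : S.IsSymm) :
    crossSandwich ε S = S - S.trace • 1 := by
  rw [hε.crossSandwich_of_axialVector_eq_zero (hε.axialVector_of_isSymm hS), hS.eq]
  module

theorem crossSandwich_of_transpose_eq_neg (hε : IsCrossProduct ε) {A : Matrix ι ι R} (hA : Aᵀ = -A)
    (haxial : axialVector ε A = 0) : crossSandwich ε A = (-3 : R) • A := by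
  rw [hε.crossSandwich_of_axialVector_eq_zero haxial, hA, trace_eq_zero_of_transpose_eq_neg hA]
  module

theorem trace_crossSandwich_of_isSymm (hε : IsCrossProduct ε) {S : Matrix ι ι R} (hS : S.IsSymm) :
    (crossSandwich ε S).trace = (1 - Fintype.card ι) * S.trace := by
  rw [hε.crossSandwich_of_isSymm hS, Matrix.trace_sub, Matrix.trace_smul, Matrix.trace_one,
    smul_eq_mul]
  ring

theorem sum_lie_crossMatrixRow_crossMatrix (hε : IsCrossProduct ε) {A : Matrix ι ι R}
    (hA : Aᵀ = -A) (haxial : axialVector ε A = 0) :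
    ∑ u, ⁅crossMatrixRow ε A u, crossMatrix ε u⁆ = (6 : R) • A := by
  simp only [Ring.lie_def, sum_sub_distrib, hε.sum_crossMatrixRow_mul_crossMatrix,
    hε.sum_crossMatrix_mul_crossMatrixRow]
  rw [hA, crossSandwich_neg, hε.crossSandwich_of_transpose_eq_neg hA haxial]
  module

theorem sum_trace_crossMatrixRow_mul_self (hε : IsCrossProduct ε) (X : Matrix ι ι R) :
    ∑ u, (crossMatrixRow ε X u * crossMatrixRow ε X u).trace =
      (1 - Fintype.card ι) * (Xᵀ * X).trace := by
  rw [← Matrix.trace_sum, hε.sum_crossMatrixRow_mul,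
    hε.trace_crossSandwich_of_isSymm (Matrix.isSymm_transpose_mul_self X)]

theorem sum_trace_lie_mul_lie (hε : IsCrossProduct ε) {A : Matrix ι ι R}
    (hA : Aᵀ = -A) (haxial : axialVector ε A = 0) :
    ∑ u, (⁅crossMatrix ε u, A⁆ * ⁅crossMatrix ε u, A⁆).trace =
      (2 * Fintype.card ι - 8) * (A * A).trace := by
  have hsymm : (A * A).IsSymm := by simp [Matrix.IsSymm, Matrix.transpose_mul, hA]
  simp only [trace_lie_mul_lie, sum_sub_distrib, ← mul_sum,
    sum_trace_crossMatrix_mul, sum_trace_crossMatrix_mul_mul]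
  rw [hε.crossSandwich_of_transpose_eq_neg hA haxial, hε.trace_crossSandwich_of_isSymm hsymm,
    smul_mul_assoc, Matrix.trace_smul, smul_eq_mul]
  ring

theorem sum_trace_lie_lie_mul_lie_lie (hε : IsCrossProduct ε) {A : Matrix ι ι R}
    (hA : Aᵀ = -A) (haxial : axialVector ε A = 0) :
    ∑ u, (⁅⁅crossMatrix ε u, A⁆, A⁆ * ⁅⁅crossMatrix ε u, A⁆, A⁆).trace =
      (32 - 2 * Fintype.card ι) * (A * A * (A * A)).trace - 6 * (A * A).trace ^ 2 := by
  have hsymm : (A * A).IsSymm := by simp [Matrix.IsSymm, Matrix.transpose_mul, hA]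
  have hsymm_sq : (A * A * (A * A)).IsSymm := by
    rw [Matrix.IsSymm, Matrix.transpose_mul, hsymm.eq]
  have hsq : (crossSandwich ε (A * A) * (A * A)).trace =
      (A * A * (A * A)).trace - (A * A).trace ^ 2 := by
    rw [hε.crossSandwich_of_isSymm hsymm, sub_mul, Matrix.trace_sub, smul_mul_assoc, one_mul,
      Matrix.trace_smul, smul_eq_mul, sq]
  have hcube : (crossSandwich ε A * (A * A * A)).trace = -3 * (A * A * (A * A)).trace := by
    rw [hε.crossSandwich_of_transpose_eq_neg hA haxial, smul_mul_assoc, Matrix.trace_smul,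
      smul_eq_mul]
    simp only [mul_assoc]
  simp only [trace_lie_lie_mul_lie_lie, sum_add_distrib, sum_sub_distrib,
    ← mul_sum, sum_trace_crossMatrix_mul, sum_trace_crossMatrix_mul_mul, hsq, hcube,
    hε.trace_crossSandwich_of_isSymm hsymm_sq]
  ring

end IsAddTorsionFree

variable [LinearOrder R] [IsStrictOrderedRing R]

theorem crossMatrixRow_eq_lie (hε : IsCrossProduct ε) (hι : Fintype.card ι = 7)
    {A : Matrix ι ι R} (hA : Aᵀ = -A) (haxial : axialVector ε A = 0) (u : ι) :
    crossMatrixRow ε A u = ⁅crossMatrix ε u, A⁆ := by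
  have hrow : ∑ v, (crossMatrixRow ε A v * crossMatrixRow ε A v).trace = 6 * (A * A).trace := by
    rw [hε.sum_trace_crossMatrixRow_mul_self, hι, hA, neg_mul, Matrix.trace_neg]
    norm_num
  have hmixed : ∑ v, (crossMatrixRow ε A v * ⁅crossMatrix ε v, A⁆).trace = 6 * (A * A).trace := by
    simp only [← trace_lie_mul]
    rw [← Matrix.trace_sum, ← sum_mul, hε.sum_lie_crossMatrixRow_crossMatrix hA haxial,
      smul_mul_assoc, Matrix.trace_smul, smul_eq_mul]
  have hlie : ∑ v, (⁅crossMatrix ε v, A⁆ * ⁅crossMatrix ε v, A⁆).trace = 6 * (A * A).trace := by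
    rw [hε.sum_trace_lie_mul_lie hA haxial, hι]
    norm_num
  refine sub_eq_zero.mp (eq_zero_of_sum_trace_mul_self_eq_zero
    (D := fun v => crossMatrixRow ε A v - ⁅crossMatrix ε v, A⁆) (fun v => ?_) ?_ u)
  · simp only [Ring.lie_def, Matrix.transpose_sub, Matrix.transpose_mul, hA,
      hε.transpose_crossMatrix, hε.transpose_crossMatrixRow]
    noncomm_ring
  · have hcomm (v : ι) := Matrix.trace_mul_comm ⁅crossMatrix ε v, A⁆ (crossMatrixRow ε A v)
    simp only [sub_mul, mul_sub, Matrix.trace_sub, sum_sub_distrib, hcomm, hrow, hmixed,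
      hlie, sub_self]

theorem crossMatrixRow_mul_self_eq_lie_lie (hε : IsCrossProduct ε) (hι : Fintype.card ι = 7)
    {A : Matrix ι ι R} (hA : Aᵀ = -A) (haxial : axialVector ε A = 0) (u : ι) :
    crossMatrixRow ε (A * A) u = ⁅⁅crossMatrix ε u, A⁆, A⁆ := calc
  crossMatrixRow ε (A * A) u = ∑ a, A u a • ⁅crossMatrix ε a, A⁆ := by
    simp only [crossMatrixRow_mul, hε.crossMatrixRow_eq_lie hι hA haxial]
  _ = ⁅crossMatrixRow ε A u, A⁆ := by
    simp only [crossMatrixRow, Ring.lie_def, smul_sub, sum_sub_distrib, sum_mul,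
      mul_sum, smul_mul_assoc, mul_smul_comm]
  _ = ⁅⁅crossMatrix ε u, A⁆, A⁆ := by rw [hε.crossMatrixRow_eq_lie hι hA haxial]

theorem four_mul_trace_mul_self_mul_mul_self (hε : IsCrossProduct ε) (hι : Fintype.card ι = 7)
    {A : Matrix ι ι R} (hA : Aᵀ = -A) (haxial : axialVector ε A = 0) :
    4 * (A * A * (A * A)).trace = (A * A).trace ^ 2 := by
  have htranspose : (A * A)ᵀ = A * A := by simp [Matrix.transpose_mul, hA]
  have hrow := hε.sum_trace_crossMatrixRow_mul_self (A * A)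
  simp only [hε.crossMatrixRow_mul_self_eq_lie_lie hι hA haxial,
    hε.sum_trace_lie_lie_mul_lie_lie hA haxial, hι, htranspose] at hrow
  push_cast at hrow
  linarith

end IsCrossProduct

end CrossProduct

section Pfaffian

variable {ι R : Type*} [Fintype ι] [CommRing R]

theorem trace_mul_self_mul_mul_self (A : Matrix ι ι R) :
    (A * A * (A * A)).trace = ∑ a, ∑ b, ∑ c, ∑ d, A a b * A b c * A c d * A d a := by
  rw [Matrix.mul_assoc]
  simp only [Matrix.trace, Matrix.diag, Matrix.mul_apply, mul_sum, mul_assoc]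

theorem sum_pfaffian_sq {A : Matrix ι ι R} (hA : Aᵀ = -A) :
    ∑ a, ∑ b, ∑ c, ∑ d, (A a b * A c d - A a c * A b d + A a d * A b c) ^ 2 =
      3 * (A * A).trace ^ 2 - 6 * (A * A * (A * A)).trace := by
  have hskew (a b : ι) : A b a = -A a b := congrFun₂ hA a b
  have hexpand (a b c d : ι) : (A a b * A c d - A a c * A b d + A a d * A b c) ^ 2 =
      A a b ^ 2 * A c d ^ 2 + A a c ^ 2 * A b d ^ 2 + A a d ^ 2 * A b c ^ 2
        - 2 * (A a b * A b c * A c d * A d a) - 2 * (A a b * A b d * A d c * A c a)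
        - 2 * (A a c * A c b * A b d * A d a) := by
    rw [hskew a d, hskew a c, hskew c d, hskew b c]
    ring
  have hprod₁ : ∑ a, ∑ b, ∑ c, ∑ d, A a b ^ 2 * A c d ^ 2 = (A * A).trace ^ 2 := by
    simp only [← mul_sum, ← sum_mul]
    rw [trace_mul_self_of_transpose_eq_neg hA, neg_sq, sq]
  have hprod₂ : ∑ a, ∑ b, ∑ c, ∑ d, A a c ^ 2 * A b d ^ 2 = (A * A).trace ^ 2 :=
    (sum_congr rfl fun a _ => sum_comm).trans hprod₁
  have hprod₃ : ∑ a, ∑ b, ∑ c, ∑ d, A a d ^ 2 * A b c ^ 2 = (A * A).trace ^ 2 :=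
    (sum_congr rfl fun a _ => sum_comm_cycle).trans hprod₁
  have hcycle₁ : ∑ a, ∑ b, ∑ c, ∑ d, A a b * A b d * A d c * A c a = (A * A * (A * A)).trace := by
    rw [trace_mul_self_mul_mul_self]
    exact sum_congr rfl fun a _ => sum_congr rfl fun b _ => sum_comm
  have hcycle₂ : ∑ a, ∑ b, ∑ c, ∑ d, A a c * A c b * A b d * A d a = (A * A * (A * A)).trace := by
    rw [trace_mul_self_mul_mul_self]
    exact sum_congr rfl fun a _ => sum_comm
  simp only [hexpand, sum_add_distrib, sum_sub_distrib, ← mul_sum _ _ (2 : R), hprod₁,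
    hprod₂, hprod₃, hcycle₁, hcycle₂, ← trace_mul_self_mul_mul_self]
  ring

end Pfaffian

theorem strictMono_comp_iff_eq_sort {α : Type*} [LinearOrder α] {k : ℕ} {v : Fin k → α}
    (hv : Injective v) (σ : Equiv.Perm (Fin k)) : StrictMono (v ∘ σ) ↔ σ = Tuple.sort v := by
  have hsort : StrictMono (v ∘ Tuple.sort v) :=
    (Tuple.monotone_sort v).strictMono_of_injective (hv.comp (Tuple.sort v).injective)
  refine ⟨fun hσ => ?_, fun hσ => hσ ▸ hsort⟩
  have hcomp := Tuple.unique_monotone hσ.monotone hsort.monotone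
  exact Equiv.ext fun i => hv (congrFun hcomp i)

section SymmetricSum

variable {α M : Type*} [Fintype α] [AddCommMonoid M]

theorem sum_fin_succ_arrow {k : ℕ} (f : (Fin (k + 1) → α) → M) :
    ∑ v, f v = ∑ a, ∑ v, f (Matrix.vecCons a v) := by
  rw [← (Fin.consEquiv fun _ => α).sum_comp, Fintype.sum_prod_type]
  rfl

variable [LinearOrder α]

open Classical in
theorem sum_eq_factorial_nsmul_sum_strictMono {k : ℕ} {f : (Fin k → α) → M}
    (hperm : ∀ v (σ : Equiv.Perm (Fin k)), f (v ∘ σ) = f v) (hinj : ∀ v, ¬Injective v → f v = 0) :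
    ∑ v, f v = k.factorial • ∑ v, if StrictMono v then f v else 0 := by
  have hsort (v : Fin k → α) :
      f v = ∑ σ : Equiv.Perm (Fin k), if StrictMono (v ∘ σ) then f (v ∘ σ) else 0 := by
    by_cases hv : Injective v
    · simp [strictMono_comp_iff_eq_sort hv, hperm]
    · simp [hperm, hinj v hv]
  have hreindex (σ : Equiv.Perm (Fin k)) :
      ∑ v : Fin k → α, (if StrictMono (v ∘ σ) then f (v ∘ σ) else 0) =
        ∑ v, if StrictMono v then f v else 0 :=
    (σ.symm.arrowCongr (Equiv.refl α)).sum_comp fun v => if StrictMono v then f v else 0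
  rw [sum_congr rfl fun v _ => hsort v, sum_comm, sum_congr rfl fun σ _ => hreindex σ,
    sum_const, card_univ, Fintype.card_perm, Fintype.card_fin]

theorem sum_fin_two_eq_two_nsmul_sum_lt {f : (Fin 2 → α) → M}
    (hperm : ∀ v (σ : Equiv.Perm (Fin 2)), f (v ∘ σ) = f v) (hinj : ∀ v, ¬Injective v → f v = 0) :
    ∑ a, ∑ b, f ![a, b] = 2 • ∑ a, ∑ b, if a < b then f ![a, b] else 0 := by
  have h := sum_eq_factorial_nsmul_sum_strictMono hperm hinj
  simpa [sum_fin_succ_arrow, Subsingleton.strictMono, Matrix.empty_eq, Nat.factorial] using h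

theorem sum_fin_four_eq_twentyFour_nsmul_sum_lt {f : (Fin 4 → α) → M}
    (hperm : ∀ v (σ : Equiv.Perm (Fin 4)), f (v ∘ σ) = f v) (hinj : ∀ v, ¬Injective v → f v = 0) :
    ∑ a, ∑ b, ∑ c, ∑ d, f ![a, b, c, d] =
      24 • ∑ a, ∑ b, ∑ c, ∑ d, if a < b ∧ b < c ∧ c < d then f ![a, b, c, d] else 0 := by
  have h := sum_eq_factorial_nsmul_sum_strictMono hperm hinj
  simpa [sum_fin_succ_arrow, Subsingleton.strictMono, Matrix.empty_eq, Nat.factorial] using h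

end SymmetricSum

theorem e_dotProduct_e (i j : Fin 7) : e i ⬝ᵥ e j = (1 : Matrix (Fin 7) (Fin 7) ℝ) i j := by
  simp [e, dotProduct, Matrix.one_apply, eq_comm]

theorem phi_swap (x y z : Fin 7 → ℝ) : phi y x z = -phi x y z := by
  simp only [phi, w3]
  ring

theorem phi_rotate (x y z : Fin 7 → ℝ) : phi y z x = phi x y z := by
  simp only [phi, w3]
  ring

theorem sum_phi_mul_phi_add_sum_phi_mul_phi (x y z w : Fin 7 → ℝ) :
    ∑ u, phi x y (e u) * phi z w (e u) + ∑ u, phi z y (e u) * phi x w (e u) =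
      2 * (x ⬝ᵥ z) * (y ⬝ᵥ w) - (x ⬝ᵥ y) * (z ⬝ᵥ w) - (z ⬝ᵥ y) * (x ⬝ᵥ w) := by
  simp only [phi, w3, e, dotProduct, Fin.sum_univ_seven, Fin.reduceEq, ↓reduceIte]
  ring

theorem isCrossProduct_eps : IsCrossProduct eps where
  swap i j k := phi_swap (e i) (e j) (e k)
  rotate i j k := phi_rotate (e i) (e j) (e k)
  lagrange i j k l := by
    simp only [eps, ← e_dotProduct_e]
    exact sum_phi_mul_phi_add_sum_phi_mul_phi (e i) (e j) (e k) (e l)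

theorem wedge22_comp_perm (A B : (Fin 7 → ℝ) → (Fin 7 → ℝ) → ℝ) (v : Fin 4 → Fin 7 → ℝ)
    (τ : Equiv.Perm (Fin 4)) :
    wedge22 A B (v ∘ τ) = (Equiv.Perm.sign τ : ℤ) * wedge22 A B v := by
  simp only [wedge22]
  rw [mul_left_comm, mul_sum (a := ((Equiv.Perm.sign τ : ℤ) : ℝ))]
  congr 1
  refine Fintype.sum_equiv (Equiv.mulLeft τ) _ _ fun σ => ?_
  rcases Int.units_eq_one_or (Equiv.Perm.sign τ) with hτ | hτ <;> simp [hτ]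

theorem wedge22_eq_zero_of_not_injective (A B : (Fin 7 → ℝ) → (Fin 7 → ℝ) → ℝ)
    {v : Fin 4 → Fin 7 → ℝ} (hv : ¬Injective v) : wedge22 A B v = 0 := by
  obtain ⟨i, j, hij, hne⟩ := not_injective_iff.mp hv
  have hswap : v ∘ Equiv.swap i j = v := by
    ext1 t
    simp only [comp_apply, Equiv.swap_apply_def]
    grind
  have h := wedge22_comp_perm A B v (Equiv.swap i j)
  rw [hswap, Equiv.Perm.sign_swap hne] at h
  push_cast at h
  linarith

theorem sum_perm_fin_succ {M : Type*} [AddCommMonoid M] {k : ℕ}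
    (f : Equiv.Perm (Fin (k + 1)) → M) :
    ∑ σ, f σ = ∑ p, ∑ σ, f (Equiv.Perm.decomposeFin.symm (p, σ)) := by
  rw [← Equiv.Perm.decomposeFin.symm.sum_comp, Fintype.sum_prod_type]

theorem wedge22_self_apply {B : (Fin 7 → ℝ) → (Fin 7 → ℝ) → ℝ} (hB : ∀ x y, B y x = -B x y)
    (x y z w : Fin 7 → ℝ) :
    wedge22 B B ![x, y, z, w] = 2 * (B x y * B z w - B x z * B y w + B x w * B y z) := by
  have happly_two {k : ℕ} (p : Fin (k + 3)) (σ : Equiv.Perm (Fin (k + 2))) :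
      Equiv.Perm.decomposeFin.symm (p, σ) 2 = Equiv.swap 0 p (σ 1).succ :=
    Equiv.Perm.decomposeFin_symm_apply_succ σ p 1
  have happly_three {k : ℕ} (p : Fin (k + 4)) (σ : Equiv.Perm (Fin (k + 3))) :
      Equiv.Perm.decomposeFin.symm (p, σ) 3 = Equiv.swap 0 p (σ 2).succ :=
    Equiv.Perm.decomposeFin_symm_apply_succ σ p 2
  simp only [wedge22, sum_perm_fin_succ, Fin.sum_univ_succ, univ_unique, sum_singleton,
    Equiv.Perm.default_eq, Fin.default_eq_zero, Equiv.Perm.coe_one, id_eq, Fin.reduceSucc,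
    Equiv.Perm.decomposeFin.symm_sign, Equiv.Perm.sign_one, Units.val_one, Units.val_neg,
    Equiv.Perm.decomposeFin_symm_apply_zero, Equiv.Perm.decomposeFin_symm_apply_one, happly_two,
    happly_three, Equiv.swap_apply_def, Fin.reduceEq, ↓reduceIte, Matrix.cons_val, one_mul,
    neg_mul, hB x y, hB x z, hB x w, hB y z, hB y w, hB z w]
  ring

section CoordMatrix

variable (β : AlternatingMap ℝ (Fin 7 → ℝ) ℝ (Fin 2))

/-- The coordinate matrix `(β(eᵢ, eⱼ))ᵢⱼ` of a 2-form. -/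
def coordMatrix : Matrix (Fin 7) (Fin 7) ℝ := Matrix.of fun i j => β ![e i, e j]

theorem alternatingMap_apply_swap (x y : Fin 7 → ℝ) : β ![y, x] = -β ![x, y] := by
  rw [← β.map_swap ![x, y] Fin.zero_ne_one]
  congr 1
  ext t : 1
  fin_cases t <;> rfl

theorem transpose_coordMatrix : (coordMatrix β)ᵀ = -coordMatrix β := by
  ext i j
  exact alternatingMap_apply_swap β (e i) (e j)

theorem sum_sq_apply_e_eq_two_mul_sum_lt :
    ∑ a, ∑ b, β ![e a, e b] ^ 2 = 2 * ∑ a, ∑ b, if a < b then β ![e a, e b] ^ 2 else 0 := by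
  have hvec (a b : Fin 7) : e ∘ ![a, b] = ![e a, e b] := (FinVec.map_eq e ![a, b]).symm
  have h := sum_fin_two_eq_two_nsmul_sum_lt (f := fun v => β (e ∘ v) ^ 2)
    (fun v σ => by
      rw [← comp_assoc, β.map_perm]
      rcases Int.units_eq_one_or (Equiv.Perm.sign σ) with hσ | hσ <;> simp [hσ])
    (fun v hv => by
      rw [β.map_eq_zero_of_not_injective _ (mt Injective.of_comp hv), zero_pow two_ne_zero])
  simpa only [hvec, nsmul_eq_mul, Nat.cast_ofNat] using h

theorem sum_sq_wedge22_eq_mul_sum_lt (A B : (Fin 7 → ℝ) → (Fin 7 → ℝ) → ℝ) :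
    ∑ a, ∑ b, ∑ c, ∑ d, wedge22 A B ![e a, e b, e c, e d] ^ 2 =
      24 * ∑ a, ∑ b, ∑ c, ∑ d,
        if a < b ∧ b < c ∧ c < d then wedge22 A B ![e a, e b, e c, e d] ^ 2 else 0 := by
  have hvec (a b c d : Fin 7) : e ∘ ![a, b, c, d] = ![e a, e b, e c, e d] :=
    (FinVec.map_eq e ![a, b, c, d]).symm
  have h := sum_fin_four_eq_twentyFour_nsmul_sum_lt (f := fun v => wedge22 A B (e ∘ v) ^ 2)
    (fun v σ => by
      rw [← comp_assoc, wedge22_comp_perm]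
      rcases Int.units_eq_one_or (Equiv.Perm.sign σ) with hσ | hσ <;> simp [hσ])
    (fun v hv => by
      rw [wedge22_eq_zero_of_not_injective _ _ (mt Injective.of_comp hv), zero_pow two_ne_zero])
  simpa only [hvec, nsmul_eq_mul, Nat.cast_ofNat] using h

theorem trace_coordMatrix_mul_self :
    (coordMatrix β * coordMatrix β).trace =
      -2 * ∑ a, ∑ b, if a < b then β ![e a, e b] ^ 2 else 0 := by
  rw [trace_mul_self_of_transpose_eq_neg (transpose_coordMatrix β), neg_mul,
    ← sum_sq_apply_e_eq_two_mul_sum_lt]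
  rfl

theorem sum_lt_sq_wedge22_self :
    (∑ a, ∑ b, ∑ c, ∑ d, if a < b ∧ b < c ∧ c < d then
        wedge22 (fun x y => β ![x, y]) (fun x y => β ![x, y]) ![e a, e b, e c, e d] ^ 2 else 0) =
      (coordMatrix β * coordMatrix β).trace ^ 2 / 2
        - (coordMatrix β * coordMatrix β * (coordMatrix β * coordMatrix β)).trace := by
  have hpfaffian (a b c d : Fin 7) :
      wedge22 (fun x y => β ![x, y]) (fun x y => β ![x, y]) ![e a, e b, e c, e d] =
        2 * (coordMatrix β a b * coordMatrix β c d - coordMatrix β a c * coordMatrix β b d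
          + coordMatrix β a d * coordMatrix β b c) :=
    wedge22_self_apply (alternatingMap_apply_swap β) (e a) (e b) (e c) (e d)
  have hordered := sum_sq_wedge22_eq_mul_sum_lt (fun x y => β ![x, y]) (fun x y => β ![x, y])
  simp only [hpfaffian, mul_pow, ← mul_sum, sum_pfaffian_sq (transpose_coordMatrix β)]
    at hordered ⊢
  linear_combination (-1 / 24 : ℝ) * hordered

end CoordMatrix

theorem wedge_sq_norm_general {ε : Fin 7 → Fin 7 → Fin 7 → ℝ} (hε : IsCrossProduct ε)
    (β : AlternatingMap ℝ (Fin 7 → ℝ) ℝ (Fin 2))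
    (hβ : ∀ i : Fin 7, ∑ j : Fin 7, ∑ k : Fin 7, ε i j k * β ![e j, e k] = 0) :
    (∑ a : Fin 7, ∑ b : Fin 7, ∑ c : Fin 7, ∑ d : Fin 7,
        if a < b ∧ b < c ∧ c < d then
          (wedge22 (fun x y => β ![x, y]) (fun x y => β ![x, y]) ![e a, e b, e c, e d]) ^ 2
        else 0)
      = (∑ a : Fin 7, ∑ b : Fin 7, if a < b then (β ![e a, e b]) ^ 2 else 0) ^ 2 := by
  have htrace := hε.four_mul_trace_mul_self_mul_mul_self rfl (transpose_coordMatrix β) (funext hβ)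
  rw [sum_lt_sq_wedge22_self]
  rw [trace_coordMatrix_mul_self] at htrace ⊢
  linarith

/-- for `β` in `Λ²₁₄`, `|β∧β|² = |β|⁴`. -/
theorem wedge_sq_norm (β : AlternatingMap ℝ (Fin 7 → ℝ) ℝ (Fin 2))
    (hβ : ∀ i : Fin 7, ∑ j : Fin 7, ∑ k : Fin 7, eps i j k * β ![e j, e k] = 0) :
    (∑ a : Fin 7, ∑ b : Fin 7, ∑ c : Fin 7, ∑ d : Fin 7,
        if a < b ∧ b < c ∧ c < d then
          (wedge22 (fun x y => β ![x, y]) (fun x y => β ![x, y]) ![e a, e b, e c, e d]) ^ 2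
        else 0)
      = (∑ a : Fin 7, ∑ b : Fin 7, if a < b then (β ![e a, e b]) ^ 2 else 0) ^ 2 :=
  wedge_sq_norm_general isCrossProduct_eps β hβ

end G2

end
end

section
/- Let β be an alternating 2-form on ℝ⁷ satisfying Σ_{j,k=1}^{7} ε_{ijk} β(e_j,e_k) = 0 for every i ∈ {1,…,7}. Then |β∧β∧β|² ≤ (2/3)|β|⁶, where |β|² := Σ_{a<b} β(e_a,e_b)² and |β∧β∧β|² := Σ_{a₁<⋯<a₆} (β∧β∧β)(e_{a₁},…,e_{a₆})². -/
open scoped BigOperators Matrix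

noncomputable section

namespace G2

/-!
Write `s = |β|²`, let `B` be the skew matrix of `β`, and let `p` be the Hodge dual of
`β ∧ β ∧ β / 6`, so that `|β ∧ β ∧ β|² = 36 |p|²`. For `β` in `Λ²₁₄`, a direct computation gives
`B³ + (s/2) B = -[p]`. Since `[p]² = p pᵀ - |p|² 1`, squaring this shows that every eigenvalue `u`
of `S = BᵀB` with eigenvector orthogonal to `p` satisfies `u (u - s/2)² = |p|²`. All but at most
one vector of an orthonormal eigenbasis of `S` are orthogonal to `p`, and the eigenvalues are
nonnegative with sum `2s`; hence some such `u` is at most `2s/3`, a range on which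
`u (u - s/2)² ≤ s³/54` (with equality at `s/6` and `2s/3`). So `|p|² ≤ s³/54`.
-/

section Combinatorics

theorem sum_perm_sign_mul_comp {α R : Type*} [CommRing R] {n : ℕ}
    (F : (Fin (n + 1) → α) → R) (v : Fin (n + 1) → α) :
    ∑ σ : Equiv.Perm (Fin (n + 1)), ((Equiv.Perm.sign σ : ℤ) : R) * F (v ∘ σ) =
      ∑ p : Fin (n + 1), (-1) ^ (p : ℕ) * ∑ τ : Equiv.Perm (Fin n),
        ((Equiv.Perm.sign τ : ℤ) : R) * F (Matrix.vecCons (v p) (v ∘ p.succAbove ∘ τ)) := by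
  -- A permutation is determined by `p = σ 0` and the permutation it induces on the rest.
  let ofFirst (x : Fin (n + 1) × Equiv.Perm (Fin n)) : Equiv.Perm (Fin (n + 1)) :=
    x.1.cycleRange⁻¹ * Equiv.Perm.decomposeFin.symm (0, x.2)
  have ofFirst_zero (x) : ofFirst x 0 = x.1 := by
    simp [ofFirst]
  have ofFirst_succ (x) (j : Fin n) : ofFirst x j.succ = x.1.succAbove (x.2 j) := by
    simp [ofFirst]
  have sign_ofFirst (x) :
      Equiv.Perm.sign (ofFirst x) = (-1) ^ (x.1 : ℕ) * Equiv.Perm.sign x.2 := by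
    simp [ofFirst, Fin.sign_cycleRange]
  have ofFirst_bijective : Function.Bijective ofFirst := by
    refine (Fintype.bijective_iff_injective_and_card _).2 ⟨?_, ?_⟩
    · rintro ⟨p, τ⟩ ⟨q, ρ⟩ h
      obtain rfl : p = q := by simpa only [ofFirst_zero] using congr($h 0)
      simpa [ofFirst] using h
    · simp [Fintype.card_perm, Nat.factorial_succ]
  have comp_ofFirst (x) :
      v ∘ ofFirst x = Matrix.vecCons (v x.1) (v ∘ x.1.succAbove ∘ x.2) := by
    funext j
    cases j using Fin.cases <;> simp [ofFirst_zero, ofFirst_succ]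
  rw [← ofFirst_bijective.sum_comp, Fintype.sum_prod_type]
  simp [comp_ofFirst, sign_ofFirst, Finset.mul_sum, mul_assoc]

theorem sum_perm_sign_mul_mul {α R : Type*} [CommRing R] {n : ℕ} (A : α → α → R)
    (F : (Fin n → α) → R) (v : Fin (n + 2) → α) :
    ∑ σ : Equiv.Perm (Fin (n + 2)), ((Equiv.Perm.sign σ : ℤ) : R) *
        (A (v (σ 0)) (v (σ 1)) * F fun i => v (σ i.succ.succ)) =
      ∑ p : Fin (n + 2), (-1) ^ (p : ℕ) * ∑ q : Fin (n + 1), (-1) ^ (q : ℕ) *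
        (A (v p) (v (p.succAbove q)) * ∑ τ : Equiv.Perm (Fin n),
          ((Equiv.Perm.sign τ : ℤ) : R) * F (v ∘ p.succAbove ∘ q.succAbove ∘ τ)) := by
  have expand_first := sum_perm_sign_mul_comp
    (fun w => A (w 0) (w 1) * F fun i => w i.succ.succ) v
  have expand_second (p : Fin (n + 2)) := sum_perm_sign_mul_comp
    (fun w => A (v p) (w 0) * F fun i => w i.succ) (v ∘ p.succAbove)
  simp only [Function.comp_apply, Matrix.cons_val_zero, Matrix.cons_val_one,
    Matrix.cons_val_succ] at expand_first expand_second
  simp only [expand_first, expand_second, Finset.mul_sum, mul_left_comm (A _ _)]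
  rfl

theorem sum_perm_fin_two_sign_mul {R : Type*} [CommRing R] (F : Fin 2 → Fin 2 → R) :
    ∑ σ : Equiv.Perm (Fin 2), ((Equiv.Perm.sign σ : ℤ) : R) * F (σ 0) (σ 1) =
      F 0 1 - F 1 0 := by
  have univ_eq : (Finset.univ : Finset (Equiv.Perm (Fin 2))) = {1, Equiv.swap 0 1} := by decide
  rw [univ_eq, Finset.sum_pair (by decide)]
  simp [sub_eq_add_neg]

theorem sum_vecCons {α M : Type*} [Fintype α] [AddCommMonoid M] {n : ℕ}
    (F : (Fin (n + 1) → α) → M) :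
    ∑ a : Fin (n + 1) → α, F a = ∑ x : α, ∑ a : Fin n → α, F (Matrix.vecCons x a) := by
  rw [← (Fin.consEquiv fun _ => α).sum_comp, Fintype.sum_prod_type]
  rfl

theorem strictMono_iff_exists_eq_succAbove {n : ℕ} {f : Fin n → Fin (n + 1)} :
    StrictMono f ↔ ∃ i : Fin (n + 1), i.succAbove = f := by
  refine ⟨fun hf => ?_, fun ⟨i, hi⟩ => hi ▸ Fin.strictMono_succAbove i⟩
  obtain ⟨i, hi⟩ : ∃ i, ∀ j, f j ≠ i := by
    by_contra! hsurj
    simpa using Fintype.card_le_of_surjective f hsurj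
  choose g hg using fun j => Fin.exists_succAbove_eq (hi j)
  have hg_mono : StrictMono g := fun j k hjk => by
    simpa [← hg] using hf hjk
  have hg_id : g = id := (hg_mono.range_inj strictMono_id).1 <| by
    rw [(Finite.surjective_of_injective hg_mono.injective).range_eq, Set.range_id]
  exact ⟨i, funext fun j => by simpa [hg_id] using hg j⟩

theorem sum_strictMono {M : Type*} [AddCommMonoid M] {n : ℕ} (F : (Fin n → Fin (n + 1)) → M)
    [DecidablePred (StrictMono : (Fin n → Fin (n + 1)) → Prop)] :
    (∑ a : Fin n → Fin (n + 1), if StrictMono a then F a else 0) =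
      ∑ i : Fin (n + 1), F i.succAbove := by
  have filter_eq : (Finset.univ.filter StrictMono : Finset (Fin n → Fin (n + 1))) =
      Finset.univ.image Fin.succAbove := by
    ext a
    simp [strictMono_iff_exists_eq_succAbove]
  rw [← Finset.sum_filter, filter_eq, Finset.sum_image Fin.succAbove_left_injective.injOn]

theorem sum_six_increasing {α M : Type*} [AddCommMonoid M] (F : (Fin 6 → α) → M)
    (v : Fin 7 → α) :
    (∑ a₁ : Fin 7, ∑ a₂ : Fin 7, ∑ a₃ : Fin 7, ∑ a₄ : Fin 7, ∑ a₅ : Fin 7, ∑ a₆ : Fin 7,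
        if a₁ < a₂ ∧ a₂ < a₃ ∧ a₃ < a₄ ∧ a₄ < a₅ ∧ a₅ < a₆ then
          F ![v a₁, v a₂, v a₃, v a₄, v a₅, v a₆] else 0) =
      ∑ i : Fin 7, F (v ∘ i.succAbove) := by
  classical
  have comp_vec (a₁ a₂ a₃ a₄ a₅ a₆ : Fin 7) :
      v ∘ ![a₁, a₂, a₃, a₄, a₅, a₆] = ![v a₁, v a₂, v a₃, v a₄, v a₅, v a₆] :=
    (FinVec.map_eq v ![a₁, a₂, a₃, a₄, a₅, a₆]).symm
  rw [← sum_strictMono fun a => F (v ∘ a)]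
  simp only [← comp_vec, sum_vecCons, Nat.reduceAdd, Finset.univ_unique, strictMono_vecCons,
    Fin.isValue, Matrix.cons_val_zero, Matrix.cons_val_fin_one, Subsingleton.strictMono, and_true,
    Finset.sum_ite_irrel, Finset.sum_singleton, Finset.sum_const_zero]
  rfl

end Combinatorics

section Pfaffian

variable {R : Type*} [CommRing R]

/-- The Pfaffian of an alternating matrix of size `2n`, expanded along its first row. -/
def pfaffian : {n : ℕ} → Matrix (Fin (2 * n)) (Fin (2 * n)) R → R
  | 0, _ => 1
  | n + 1, A => ∑ j : Fin (2 * n + 1), (-1) ^ (j : ℕ) * A 0 j.succ *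
      pfaffian (n := n) (A.submatrix (Fin.succ ∘ j.succAbove) (Fin.succ ∘ j.succAbove))

theorem pfaffian_fin_four (A : Matrix (Fin 4) (Fin 4) R) :
    pfaffian (n := 2) A = A 0 1 * A 2 3 - A 0 2 * A 1 3 + A 0 3 * A 1 2 := by
  simp [pfaffian, Fin.sum_univ_succ, Fin.succAbove]
  ring

theorem pfaffian_fin_six (A : Matrix (Fin 6) (Fin 6) R) :
    pfaffian (n := 3) A =
      A 0 1 * (A 2 3 * A 4 5 - A 2 4 * A 3 5 + A 2 5 * A 3 4)
      - A 0 2 * (A 1 3 * A 4 5 - A 1 4 * A 3 5 + A 1 5 * A 3 4)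
      + A 0 3 * (A 1 2 * A 4 5 - A 1 4 * A 2 5 + A 1 5 * A 2 4)
      - A 0 4 * (A 1 2 * A 3 5 - A 1 3 * A 2 5 + A 1 5 * A 2 3)
      + A 0 5 * (A 1 2 * A 3 4 - A 1 3 * A 2 4 + A 1 4 * A 2 3) := by
  simp [pfaffian, Fin.sum_univ_succ, Fin.succAbove]
  ring

end Pfaffian

section Wedge

theorem wedge222_eq_sum_wedge22 (A B C : (Fin 7 → ℝ) → (Fin 7 → ℝ) → ℝ)
    (v : Fin 6 → Fin 7 → ℝ) :
    wedge222 A B C v = (1 / 2) * ∑ p : Fin 6, (-1) ^ (p : ℕ) * ∑ q : Fin 5, (-1) ^ (q : ℕ) *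
      (A (v p) (v (p.succAbove q)) * wedge22 B C (v ∘ p.succAbove ∘ q.succAbove)) := by
  have expand := sum_perm_sign_mul_mul A (fun w => B (w 0) (w 1) * C (w 2) (w 3)) v
  calc wedge222 A B C v
      = 1 / 8 * ∑ σ : Equiv.Perm (Fin 6), ((Equiv.Perm.sign σ : ℤ) : ℝ) *
          (A (v (σ 0)) (v (σ 1)) * (B (v (σ 2)) (v (σ 3)) * C (v (σ 4)) (v (σ 5)))) := by
        simp only [wedge222, mul_assoc]
    _ = 1 / 8 * _ := congrArg _ expand
    _ = _ := by
        simp only [wedge22, Finset.mul_sum, Function.comp_apply]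
        ring_nf

variable {f : (Fin 7 → ℝ) → (Fin 7 → ℝ) → ℝ}

theorem wedge22_self_eq_pfaffian (hf : ∀ x y, f y x = -f x y) (v : Fin 4 → Fin 7 → ℝ) :
    wedge22 f f v = 2 * pfaffian (n := 2) (Matrix.of fun i j => f (v i) (v j)) := by
  have lower (i j : Fin 4) (_ : j < i) : f (v i) (v j) = -f (v j) (v i) := hf _ _
  have expand_first_pair := sum_perm_sign_mul_mul f (fun w => f (w 0) (w 1)) v
  have expand_second_pair (p : Fin 4) (q : Fin 3) := sum_perm_fin_two_sign_mul fun a b =>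
    f (v (p.succAbove (q.succAbove a))) (v (p.succAbove (q.succAbove b)))
  rw [pfaffian_fin_four]
  refine (congrArg _ expand_first_pair).trans ?_
  simp only [Function.comp_apply, expand_second_pair]
  simp [Fin.sum_univ_succ, Fin.succAbove, lower]
  ring

theorem wedge222_self_eq_pfaffian (hf : ∀ x y, f y x = -f x y) (v : Fin 6 → Fin 7 → ℝ) :
    wedge222 f f f v = 6 * pfaffian (n := 3) (Matrix.of fun i j => f (v i) (v j)) := by
  have lower (i j : Fin 6) (_ : j < i) : f (v i) (v j) = -f (v j) (v i) := hf _ _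
  rw [pfaffian_fin_six, wedge222_eq_sum_wedge22]
  simp only [wedge22_self_eq_pfaffian hf, pfaffian_fin_four]
  simp [Fin.sum_univ_succ, Fin.succAbove, lower]
  ring

end Wedge

section Bracket

theorem bracket_apply (v : Fin 7 → ℝ) (i j : Fin 7) : bracket v i j = phi (e i) (e j) v := by
  have expand (x y : Fin 7 → ℝ) : ∑ k, phi x y (e k) * v k = phi x y v := by
    simp [phi, w3, e, Fin.sum_univ_seven]
    ring
  exact expand _ _

theorem bracket_eq (v : Fin 7 → ℝ) :
    bracket v = !![0, v 2, -v 1, v 4, -v 3, v 6, -v 5;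
                   -v 2, 0, v 0, v 5, -v 6, -v 3, v 4;
                   v 1, -v 0, 0, -v 6, -v 5, v 4, v 3;
                   -v 4, -v 5, v 6, 0, v 0, v 1, -v 2;
                   v 3, v 6, v 5, -v 0, 0, -v 2, -v 1;
                   -v 6, v 3, -v 4, -v 1, v 2, 0, v 0;
                   v 5, -v 4, -v 3, v 2, v 1, -v 0, 0] := by
  ext i j
  fin_cases i <;> fin_cases j <;> simp [bracket_apply, phi, w3, e]

theorem bracket_mulVec_self (v : Fin 7 → ℝ) : bracket v *ᵥ v = 0 := by
  ext i
  fin_cases i <;> simp [bracket_eq, Matrix.mulVec, dotProduct, Fin.sum_univ_seven] <;> ring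

theorem bracket_mul_self (v : Fin 7 → ℝ) :
    bracket v * bracket v = Matrix.vecMulVec v v - (v ⬝ᵥ v) • 1 := by
  ext i j
  fin_cases i <;> fin_cases j <;>
    simp [bracket_eq, Matrix.mul_apply, Matrix.vecMulVec_apply, dotProduct,
      Fin.sum_univ_seven] <;> ring

theorem angle_apply (A : Matrix (Fin 7) (Fin 7) ℝ) (i : Fin 7) :
    angle A i = ∑ j, bracket (A j) i j := rfl

theorem transpose_bracket (v : Fin 7 → ℝ) : (bracket v)ᵀ = -bracket v := by
  ext i j
  simp only [Matrix.transpose_apply, Matrix.neg_apply, bracket_apply, phi, w3]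
  ring

end Bracket

section Skew

theorem diag_eq_zero_of_transpose_eq_neg {n G : Type*} [AddGroup G] [IsAddTorsionFree G]
    {A : Matrix n n G} (hA : Aᵀ = -A) (i : n) : A i i = 0 :=
  self_eq_neg.1 congr($hA i i)

theorem ext_of_transpose_eq_neg {n G : Type*} [LinearOrder n] [AddGroup G] [IsAddTorsionFree G]
    {A B : Matrix n n G} (hA : Aᵀ = -A) (hB : Bᵀ = -B) (h : ∀ i j, i < j → A i j = B i j) :
    A = B := by
  ext i j
  rcases lt_trichotomy i j with hij | rfl | hji
  · exact h i j hij
  · rw [diag_eq_zero_of_transpose_eq_neg hA, diag_eq_zero_of_transpose_eq_neg hB]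
  · have hAij : A i j = -A j i := congr($hA j i)
    have hBij : B i j = -B j i := congr($hB j i)
    rw [hAij, hBij, h j i hji]

/-- Half the squared Frobenius norm, which for the matrix of a 2-form `β` is `|β|²`. -/
def sqNorm {n : Type*} [Fintype n] (B : Matrix n n ℝ) : ℝ := (Bᵀ * B).trace / 2

theorem sqNorm_eq_sum_lt {n : Type*} [Fintype n] [LinearOrder n] {A : Matrix n n ℝ}
    (hA : Aᵀ = -A) : sqNorm A = ∑ i, ∑ j, if i < j then A i j ^ 2 else 0 := by
  let upper (i j : n) : ℝ := if i < j then A i j ^ 2 else 0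
  have split_sq (i j : n) : A i j ^ 2 = upper i j + upper j i := by
    have hij : A i j = -A j i := congr($hA j i)
    rcases lt_trichotomy i j with h | rfl | h
    · simp [upper, h, h.not_gt]
    · simp [upper, diag_eq_zero_of_transpose_eq_neg hA]
    · simp [upper, h, h.not_gt, hij]
  calc sqNorm A = (∑ j, ∑ i, A i j ^ 2) / 2 := by
        simp [sqNorm, Matrix.trace, Matrix.mul_apply, pow_two]
    _ = (∑ j, ∑ i, upper i j + ∑ j, ∑ i, upper j i) / 2 := by
        simp only [split_sq, Finset.sum_add_distrib]
    _ = ∑ i, ∑ j, upper i j := by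
        rw [Finset.sum_comm, add_self_div_two]

end Skew

section LieAlgebra

/-- The signed Pfaffians of the minors of `B` obtained by deleting one row and column. If `B` is
the matrix of a 2-form `β` on `ℝ⁷`, this vector is the Hodge dual of `β ∧ β ∧ β / 6`. -/
def pfaffianVec (B : Matrix (Fin 7) (Fin 7) ℝ) : Fin 7 → ℝ := fun i =>
  (-1) ^ (i : ℕ) * pfaffian (n := 3) (B.submatrix i.succAbove i.succAbove)

variable {B : Matrix (Fin 7) (Fin 7) ℝ}

theorem apply_eq_of_angle_eq_zero (hB : Bᵀ = -B) (hangle : angle B = 0) :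
    B 2 3 = B 0 5 - B 1 4 ∧ B 2 4 = B 1 3 - B 0 6 ∧ B 2 5 = -B 0 3 - B 1 6 ∧
      B 2 6 = B 0 4 + B 1 5 ∧ B 4 5 = B 0 1 - B 3 6 ∧ B 4 6 = B 3 5 - B 0 2 ∧
      B 5 6 = -B 1 2 - B 3 4 := by
  have lower (i j : Fin 7) (_ : j < i) : B i j = -B j i := congr($hB j i)
  have angle_coord (i : Fin 7) := congrFun hangle i
  simp only [angle_apply, bracket_eq, Fin.sum_univ_seven, Pi.zero_apply] at angle_coord
  have h0 := angle_coord 0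
  have h1 := angle_coord 1
  have h2 := angle_coord 2
  have h3 := angle_coord 3
  have h4 := angle_coord 4
  have h5 := angle_coord 5
  have h6 := angle_coord 6
  simp [lower] at h0 h1 h2 h3 h4 h5 h6
  refine ⟨?_, ?_, ?_, ?_, ?_, ?_, ?_⟩ <;> linarith

set_option maxHeartbeats 2000000 in
-- The entries above the diagonal are 21 cubic identities in 14 free variables.
theorem cube_add_smul_eq_neg_bracket (hB : Bᵀ = -B) (hangle : angle B = 0) :
    B ^ 3 + (sqNorm B / 2) • B = -bracket (pfaffianVec B) := by
  obtain ⟨h23, h24, h25, h26, h45, h46, h56⟩ := apply_eq_of_angle_eq_zero hB hangle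
  have diag := diag_eq_zero_of_transpose_eq_neg hB
  have lower (i j : Fin 7) (_ : j < i) : B i j = -B j i := congr($hB j i)
  refine ext_of_transpose_eq_neg ?_ ?_ fun i j hij => ?_
  · simp [Matrix.transpose_pow, hB, Odd.neg_pow (by decide : Odd 3), add_comm]
  · simp [transpose_bracket]
  · fin_cases i <;> fin_cases j <;> first | exact absurd hij (by decide) | skip
    all_goals
      simp [bracket_eq, sqNorm_eq_sum_lt hB, pfaffianVec, pfaffian_fin_six, pow_three,
        Matrix.mul_apply, Fin.sum_univ_seven, Fin.succAbove, diag, lower, h23, h24, h25, h26, h45,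
        h46, h56]
      ring

end LieAlgebra

section Spectral

theorem mul_sub_half_sq_le {s u : ℝ} (hu : u ≤ 2 / 3 * s) : u * (u - s / 2) ^ 2 ≤ s ^ 3 / 54 := by
  rw [← sub_nonneg]
  calc 0 ≤ (u - s / 6) ^ 2 * (2 / 3 * s - u) := mul_nonneg (sq_nonneg _) (sub_nonneg.2 hu)
    _ = s ^ 3 / 54 - u * (u - s / 2) ^ 2 := by ring

theorem mulVec_eq_zero_of_commute {n : Type*} [Fintype n] [DecidableEq n] {B N : Matrix n n ℝ}
    {p : n → ℝ} (hB : Bᵀ = -B) (hcomm : Commute N B) (hNp : N *ᵥ p = 0)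
    (hNN : N * N = Matrix.vecMulVec p p - (p ⬝ᵥ p) • 1) : B *ᵥ p = 0 := by
  have p_dot_Bp : p ⬝ᵥ B *ᵥ p = 0 := by
    apply self_eq_neg.1
    nth_rw 1 [Matrix.dotProduct_mulVec, ← Matrix.mulVec_transpose, hB, Matrix.neg_mulVec,
      neg_dotProduct, dotProduct_comm]
  have NN_Bp : (N * N) *ᵥ B *ᵥ p = 0 := by
    rw [Matrix.mulVec_mulVec, (hcomm.mul_left hcomm).eq, ← Matrix.mulVec_mulVec,
      ← Matrix.mulVec_mulVec, hNp, Matrix.mulVec_zero, Matrix.mulVec_zero]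
  have smul_Bp : (p ⬝ᵥ p) • B *ᵥ p = 0 := by
    rw [hNN, Matrix.sub_mulVec, Matrix.vecMulVec_mulVec, p_dot_Bp, Matrix.smul_mulVec,
      Matrix.one_mulVec, MulOpposite.op_zero, zero_smul, zero_sub, neg_eq_zero] at NN_Bp
    exact NN_Bp
  rcases smul_eq_zero.1 smul_Bp with hp | hBp
  · rw [dotProduct_self_eq_zero.1 hp, Matrix.mulVec_zero]
  · exact hBp

theorem le_cube_of_forall_mul_sub_sq {ι : Type*} [Fintype ι] (hι : 4 ≤ Fintype.card ι)
    {s P : ℝ} {u c : ι → ℝ} (hu : ∀ i, 0 ≤ u i) (hu_sum : ∑ i, u i = 2 * s)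
    (hc_sum : ∑ i, c i ^ 2 = P) (huc : ∀ i, u i * c i = 0)
    (h : ∀ i, u i * (u i - s / 2) ^ 2 = P - c i ^ 2) : P ≤ s ^ 3 / 54 := by
  classical
  let T : Finset ι := Finset.univ.filter fun i => c i = 0
  have sq_eq_of_ne_zero (i : ι) (hi : c i ≠ 0) : c i ^ 2 = P := by
    have hui : u i = 0 := (mul_eq_zero.1 (huc i)).resolve_right hi
    linarith [hui ▸ h i]
  have card_compl : Tᶜ.card ≤ 1 := by
    refine Finset.card_le_one.2 fun i hi j hj => ?_
    have hi : c i ≠ 0 := by simpa [T] using hi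
    have hj : c j ≠ 0 := by simpa [T] using hj
    by_contra hij
    have pair_le : c i ^ 2 + c j ^ 2 ≤ ∑ k, c k ^ 2 := by
      rw [← Finset.sum_pair (f := fun k => c k ^ 2) hij]
      exact Finset.sum_le_univ_sum_of_nonneg fun k => sq_nonneg _
    have c_sq_pos : 0 < c i ^ 2 := by positivity
    rw [hc_sum, sq_eq_of_ne_zero i hi, sq_eq_of_ne_zero j hj] at pair_le
    linarith [sq_eq_of_ne_zero i hi]
  have three_le_card : 3 ≤ T.card := by
    have := T.card_add_card_compl
    lia
  obtain ⟨i, hi, hui⟩ : ∃ i ∈ T, u i ≤ 2 / 3 * s := by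
    refine Finset.exists_le_of_sum_le (Finset.card_pos.1 (by lia)) ?_
    have s_nonneg : 0 ≤ s := by linarith [Finset.sum_nonneg fun i (_ : i ∈ Finset.univ) => hu i]
    calc ∑ i ∈ T, u i ≤ ∑ i, u i := Finset.sum_le_univ_sum_of_nonneg hu
      _ = 3 * (2 / 3 * s) := by rw [hu_sum]; ring
      _ ≤ T.card * (2 / 3 * s) := by gcongr; exact_mod_cast three_le_card
      _ = ∑ i ∈ T, 2 / 3 * s := by rw [Finset.sum_const, nsmul_eq_mul]
  have hci : c i = 0 := by simpa [T] using hi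
  calc P = u i * (u i - s / 2) ^ 2 := by rw [h i, hci]; ring
    _ ≤ s ^ 3 / 54 := mul_sub_half_sq_le hui

theorem dotProduct_self_le_of_mul_sub_sq_eq {n : Type*} [Fintype n] [DecidableEq n]
    (hn : 4 ≤ Fintype.card n) {S : Matrix n n ℝ} (hS : S.PosSemidef) {p : n → ℝ} {s : ℝ}
    (htrace : S.trace = 2 * s) (hSp : S *ᵥ p = 0)
    (h : S * (S - (s / 2) • 1) ^ 2 = (p ⬝ᵥ p) • 1 - Matrix.vecMulVec p p) :
    p ⬝ᵥ p ≤ s ^ 3 / 54 := by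
  let b := hS.isHermitian.eigenvectorBasis
  let v (i : n) : n → ℝ := b i
  let u := hS.isHermitian.eigenvalues
  have S_v (i : n) : S *ᵥ v i = u i • v i := hS.isHermitian.mulVec_eigenvectorBasis i
  have shift_v (i : n) : (S - (s / 2) • 1) *ᵥ v i = (u i - s / 2) • v i := by
    rw [Matrix.sub_mulVec, S_v, Matrix.smul_mulVec, Matrix.one_mulVec, sub_smul]
  have v_dot_v (i : n) : v i ⬝ᵥ v i = 1 := by
    rw [← b.inner_eq_one i]
    rfl
  have sum_sq : ∑ i, (v i ⬝ᵥ p) ^ 2 = p ⬝ᵥ p := by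
    refine (b.sum_sq_inner_left (WithLp.toLp 2 p)).trans ?_
    rw [← real_inner_self_eq_norm_sq]
    rfl
  have trace_eq : ∑ i, u i = 2 * s := by
    rw [← htrace, hS.isHermitian.trace_eq_sum_eigenvalues]
    rfl
  have kernel (i : n) : u i * (v i ⬝ᵥ p) = 0 := by
    have hST : Sᵀ = S := hS.isHermitian
    rw [← smul_eq_mul, ← smul_dotProduct, ← S_v, ← hST, Matrix.mulVec_transpose,
      ← Matrix.dotProduct_mulVec, hSp, dotProduct_zero]
  refine le_cube_of_forall_mul_sub_sq hn hS.eigenvalues_nonneg trace_eq sum_sq kernel fun i => ?_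
  calc u i * (u i - s / 2) ^ 2 = v i ⬝ᵥ (S * (S - (s / 2) • 1) ^ 2) *ᵥ v i := by
        simp only [pow_two, ← Matrix.mulVec_mulVec, shift_v, S_v, Matrix.mulVec_smul,
          dotProduct_smul, v_dot_v, smul_eq_mul]
        ring
    _ = p ⬝ᵥ p - (v i ⬝ᵥ p) ^ 2 := by
        rw [h]
        simp [Matrix.sub_mulVec, Matrix.smul_mulVec, Matrix.vecMulVec_mulVec, v_dot_v,
          dotProduct_comm p, pow_two]

end Spectral

theorem dotProduct_self_pfaffianVec_le {B : Matrix (Fin 7) (Fin 7) ℝ} (hB : Bᵀ = -B)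
    (hangle : angle B = 0) : pfaffianVec B ⬝ᵥ pfaffianVec B ≤ sqNorm B ^ 3 / 54 := by
  set p := pfaffianVec B
  set s := sqNorm B with hs
  set N := B ^ 3 + (s / 2) • B with hN
  have N_eq : N = -bracket p := cube_add_smul_eq_neg_bracket hB hangle
  have N_mul_N : N * N = Matrix.vecMulVec p p - (p ⬝ᵥ p) • 1 := by
    rw [N_eq, neg_mul_neg, bracket_mul_self]
  have N_mulVec : N *ᵥ p = 0 := by
    rw [N_eq, Matrix.neg_mulVec, bracket_mulVec_self, neg_zero]
  have commute : Commute N B :=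
    ((Commute.refl B).pow_left 3).add_left ((Commute.refl B).smul_left _)
  have B_mulVec : B *ᵥ p = 0 := mulVec_eq_zero_of_commute hB commute N_mulVec N_mul_N
  refine dotProduct_self_le_of_mul_sub_sq_eq (S := Bᵀ * B) (by simp)
    (Matrix.posSemidef_conjTranspose_mul_self B) (by rw [hs, sqNorm]; ring) ?_ ?_
  · rw [← Matrix.mulVec_mulVec, B_mulVec, Matrix.mulVec_zero]
  · calc Bᵀ * B * (Bᵀ * B - (s / 2) • 1) ^ 2 = -(N * N) := by
          rw [hB, hN]
          noncomm_ring
          module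
      _ = _ := by rw [N_mul_N, neg_sub]

theorem wedge222_self_sq {f : (Fin 7 → ℝ) → (Fin 7 → ℝ) → ℝ} (hf : ∀ x y, f y x = -f x y)
    (i : Fin 7) : wedge222 f f f (e ∘ i.succAbove) ^ 2 =
      36 * pfaffianVec (Matrix.of fun a b => f (e a) (e b)) i ^ 2 := by
  rw [wedge222_self_eq_pfaffian hf, pfaffianVec, mul_pow, mul_pow, ← pow_mul,
    (even_two.mul_left _).neg_one_pow, one_mul, (by norm_num : (6 : ℝ) ^ 2 = 36)]
  rfl

theorem alternatingMap_vec_swap {R M N : Type*} [Semiring R] [AddCommMonoid M] [Module R M]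
    [AddCommGroup N] [Module R N] (β : M [⋀^Fin 2]→ₗ[R] N) (x y : M) :
    β ![y, x] = -β ![x, y] := by
  have swap : ![x, y] ∘ Equiv.swap 0 1 = ![y, x] := by
    ext i : 1
    fin_cases i <;> rfl
  rw [← β.map_swap ![x, y] zero_ne_one, swap]

/-- for `β` in `Λ²₁₄`, `|β∧β∧β|² ≤ (2/3)|β|⁶`. -/
theorem wedge_cube_norm_le (β : AlternatingMap ℝ (Fin 7 → ℝ) ℝ (Fin 2))
    (hβ : ∀ i : Fin 7, ∑ j : Fin 7, ∑ k : Fin 7, eps i j k * β ![e j, e k] = 0) :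
    (∑ a₁ : Fin 7, ∑ a₂ : Fin 7, ∑ a₃ : Fin 7, ∑ a₄ : Fin 7, ∑ a₅ : Fin 7, ∑ a₆ : Fin 7,
        if a₁ < a₂ ∧ a₂ < a₃ ∧ a₃ < a₄ ∧ a₄ < a₅ ∧ a₅ < a₆ then
          (wedge222 (fun x y => β ![x, y]) (fun x y => β ![x, y]) (fun x y => β ![x, y])
            ![e a₁, e a₂, e a₃, e a₄, e a₅, e a₆]) ^ 2
        else 0)
      ≤ (2 / 3 : ℝ)
          * (∑ a : Fin 7, ∑ b : Fin 7, if a < b then (β ![e a, e b]) ^ 2 else 0) ^ 3 := by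
  set f : (Fin 7 → ℝ) → (Fin 7 → ℝ) → ℝ := fun x y => β ![x, y]
  set B : Matrix (Fin 7) (Fin 7) ℝ := Matrix.of fun a b => f (e a) (e b)
  have f_swap (x y : Fin 7 → ℝ) : f y x = -f x y := alternatingMap_vec_swap β x y
  have skew : Bᵀ = -B := Matrix.ext fun a b => f_swap (e a) (e b)
  have angle_eq_zero : angle B = 0 := funext hβ
  calc _ = ∑ i : Fin 7, wedge222 f f f (e ∘ i.succAbove) ^ 2 :=
        sum_six_increasing (fun v => wedge222 f f f v ^ 2) e
    _ = 36 * (pfaffianVec B ⬝ᵥ pfaffianVec B) := by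
        simp only [wedge222_self_sq f_swap, ← Finset.mul_sum, dotProduct, pow_two]
        rfl
    _ ≤ 36 * (sqNorm B ^ 3 / 54) := by
        gcongr
        exact dotProduct_self_pfaffianVec_le skew angle_eq_zero
    _ = 2 / 3 * sqNorm B ^ 3 := by ring
    _ = _ := by rw [sqNorm_eq_sum_lt skew]; rfl

end G2

end
end
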